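/- arXiv:1607.03068 — 2 statements merged into one kernel-verified Lean document; each statement's English description precedes it below -/
import Mathlib

section
/- Let (M,d) be a nonempty complete metric space and let φ : M → ℝ satisfy 0 ≤ φ(x) ≤ 1 for all x ∈ M. Assume: (i) for every x ∈ M, φ(x) = ⨅_{y ∈ M} (φ(y) + d(x,y)); and (ii) for every x ∈ M and every ε > 0 there exists y ∈ M with φ(y) ≤ ε and |φ(x) − d(x,y)| ≤ ε. Then the zero set Z = {z ∈ M : φ(z) = 0} is nonempty, and for every x ∈ M, φ(x) = infDist(x, Z) (the infimum of d(x,z) over z ∈ Z). -/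
/-!
Condition (i) makes `φ` 1-Lipschitz, so `φ x ≤ dist x z` for every zero `z`. Conversely, condition
(ii) moves `x` by at most `φ x + ε` to a point where `φ ≤ ε`. Iterating it from there with errors
`ε / 2 ^ (n + 1)` gives a Cauchy sequence, whose steps sum to at most `3 * ε` and along which `φ`
tends to `0`; its limit is a zero of `φ` at distance at most `φ x + 4 * ε` from `x`.
-/

open Filter Topology Metric

section

variable {M : Type*} [PseudoMetricSpace M] {φ : M → ℝ}

theorem lipschitzWith_one_of_le_iInf_add_dist (hbdd : BddBelow (Set.range φ))
    (hφ : ∀ x, φ x ≤ ⨅ y, (φ y + dist x y)) : LipschitzWith 1 φ := by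
  obtain ⟨c, hc⟩ := hbdd
  refine LipschitzWith.of_le_add fun x y => (hφ x).trans (ciInf_le ⟨c, ?_⟩ y)
  rintro _ ⟨z, rfl⟩
  exact le_add_of_le_of_nonneg (hc ⟨z, rfl⟩) dist_nonneg

theorem le_infDist_setOf_eq_zero (hφ : LipschitzWith 1 φ) (hne : {z | φ z = 0}.Nonempty) (x : M) :
    φ x ≤ infDist x {z | φ z = 0} := by
  refine (le_infDist hne).2 fun {z} (hz : φ z = 0) => ?_
  simpa [hz] using hφ.le_add_mul x z

theorem nonneg_of_forall_exists_abs_sub_dist_le {x : M}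
    (hx : ∀ ε > 0, ∃ y, |φ x - dist x y| ≤ ε) : 0 ≤ φ x := by
  refine le_of_forall_pos_le_add fun ε hε => ?_
  obtain ⟨y, hy⟩ := hx ε hε
  linarith [(abs_le.mp hy).1, dist_nonneg (x := x) (y := y)]

theorem exists_seq_le_and_dist_succ_le_geometric
    (happrox : ∀ x, ∀ ε > 0, ∃ y, φ y ≤ ε ∧ |φ x - dist x y| ≤ ε)
    {x : M} {ε : ℝ} (hε : 0 < ε) (hx : φ x ≤ ε) :
    ∃ u : ℕ → M, u 0 = x ∧ (∀ n, φ (u n) ≤ ε / 2 ^ n) ∧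
      ∀ n, dist (u n) (u (n + 1)) ≤ 3 * ε / 2 / 2 ^ n := by
  choose next next_le abs_next_le using fun (n : ℕ) (w : M) =>
    happrox w (ε / 2 ^ (n + 1)) (by positivity)
  let u : ℕ → M := fun n => Nat.rec x next n
  have u_le : ∀ n, φ (u n) ≤ ε / 2 ^ n
    | 0 => by simpa [u] using hx
    | n + 1 => next_le n (u n)
  refine ⟨u, rfl, u_le, fun n => ?_⟩
  calc dist (u n) (u (n + 1)) ≤ φ (u n) + ε / 2 ^ (n + 1) := by
        linarith [(abs_le.mp (abs_next_le n (u n))).1]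
    _ ≤ ε / 2 ^ n + ε / 2 ^ (n + 1) := by gcongr; exact u_le n
    _ = 3 * ε / 2 / 2 ^ n := by ring

variable [CompleteSpace M]

theorem exists_eq_zero_and_dist_le_three_mul (hφ : Continuous φ)
    (happrox : ∀ x, ∀ ε > 0, ∃ y, φ y ≤ ε ∧ |φ x - dist x y| ≤ ε)
    {x : M} {ε : ℝ} (hε : 0 < ε) (hx : φ x ≤ ε) : ∃ z, φ z = 0 ∧ dist x z ≤ 3 * ε := by
  have nonneg (w : M) : 0 ≤ φ w :=
    nonneg_of_forall_exists_abs_sub_dist_le fun δ hδ => (happrox w δ hδ).imp fun _ => And.right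
  obtain ⟨u, rfl, u_le, dist_le⟩ := exists_seq_le_and_dist_succ_le_geometric happrox hε hx
  obtain ⟨z, hz⟩ := cauchySeq_tendsto_of_complete (cauchySeq_of_le_geometric_two dist_le)
  have bound_tendsto : Tendsto (fun n : ℕ => ε / 2 ^ n) atTop (𝓝 0) :=
    tendsto_const_nhds.div_atTop (tendsto_pow_atTop_atTop_of_one_lt one_lt_two)
  have values_tendsto : Tendsto (fun n => φ (u n)) atTop (𝓝 0) :=
    squeeze_zero (fun n => nonneg (u n)) u_le bound_tendsto
  exact ⟨z, tendsto_nhds_unique ((hφ.tendsto z).comp hz) values_tendsto,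
    dist_le_of_le_geometric_two_of_tendsto₀ dist_le hz⟩

theorem exists_eq_zero_and_dist_le_add (hφ : Continuous φ)
    (happrox : ∀ x, ∀ ε > 0, ∃ y, φ y ≤ ε ∧ |φ x - dist x y| ≤ ε)
    (x : M) {ε : ℝ} (hε : 0 < ε) : ∃ z, φ z = 0 ∧ dist x z ≤ φ x + ε := by
  have hε' : 0 < ε / 4 := by positivity
  obtain ⟨y, hy, hxy⟩ := happrox x (ε / 4) hε'
  obtain ⟨z, hz, hyz⟩ := exists_eq_zero_and_dist_le_three_mul hφ happrox hε' hy
  refine ⟨z, hz, ?_⟩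
  linarith [dist_triangle x y z, (abs_le.mp hxy).1]

theorem stmt_0_general [Nonempty M] (hφ : LipschitzWith 1 φ)
    (happrox : ∀ x, ∀ ε > 0, ∃ y, φ y ≤ ε ∧ |φ x - dist x y| ≤ ε) :
    {z | φ z = 0}.Nonempty ∧ ∀ x, φ x = infDist x {z | φ z = 0} := by
  have zero_near (x : M) {ε : ℝ} (hε : 0 < ε) : ∃ z, φ z = 0 ∧ dist x z ≤ φ x + ε :=
    exists_eq_zero_and_dist_le_add hφ.continuous happrox x hε
  have hne : {z | φ z = 0}.Nonempty :=
    (zero_near (Classical.arbitrary M) one_pos).imp fun _ => And.left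
  refine ⟨hne, fun x => le_antisymm (le_infDist_setOf_eq_zero hφ hne x) ?_⟩
  refine le_of_forall_pos_le_add fun ε hε => ?_
  obtain ⟨z, hz, hxz⟩ := zero_near x hε
  have hzmem : z ∈ {z | φ z = 0} := hz
  exact (infDist_le_dist_of_mem hzmem).trans hxz

end

theorem stmt_0 {M : Type*} [MetricSpace M] [Nonempty M] [CompleteSpace M]
    (φ : M → ℝ) (h0 : ∀ x, 0 ≤ φ x) (h1 : ∀ x, φ x ≤ 1)
    (hi : ∀ x, φ x = ⨅ y, (φ y + dist x y))
    (hii : ∀ x, ∀ ε > 0, ∃ y, φ y ≤ ε ∧ |φ x - dist x y| ≤ ε) :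
    ({z : M | φ z = 0}).Nonempty ∧
      ∀ x, φ x = Metric.infDist x {z : M | φ z = 0} :=
  stmt_0_general
    (lipschitzWith_one_of_le_iInf_add_dist ⟨0, Set.forall_mem_range.2 h0⟩ fun x => (hi x).le) hii
end

section
/- There exists a continuous function Flim : (ℕ → [0,1]) → [0,1] (where ℕ → [0,1] carries the product topology) such that: (1) if a : ℕ → [0,1] is a sequence with the property that for every m and every n ≥ m, |a(n) − a(n+1)| ≤ 2^{−m}, then Flim(a) = lim_{n→∞} a(n); and (2) if a : ℕ → [0,1] converges to b ∈ [0,1] and |b − a(n)| ≤ 2^{−n} for every n, then Flim(a) = b. -/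
/-!
A sequence `a` whose `n`-th increment is at most `r n`, with `∑ r n < ∞`, converges to
`a 0 + ∑ (a (n + 1) - a n)`. Clamping the `n`-th increment to `[-r n, r n]` makes this series
converge, uniformly in `a`, for *every* sequence, so its sum is continuous in `a`; projecting onto
the interval keeps the value there. When the increments obey the bound, nothing is clamped.
If instead `a n` is within `u n` of `b`, then the triangle inequality bounds the `n`-th increment by
`u n + u (n + 1)`, so this is the rate at which to clamp.
-/

open Filter Set Topology

/-- The truncation of `x` to the interval `[-r, r]`, used to force increments to be summable.
For `r < 0`, where that interval is empty, it is the constant `-r`. -/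
def clampAbs (r x : ℝ) : ℝ := max (-r) (min r x)

theorem continuous_clampAbs (r : ℝ) : Continuous (clampAbs r) := by
  unfold clampAbs
  fun_prop

theorem abs_clampAbs_le (r x : ℝ) : |clampAbs r x| ≤ |r| :=
  abs_le.2 ⟨(neg_le_neg (le_abs_self r)).trans (le_max_left _ _),
    max_le (neg_le_abs r) ((min_le_left r x).trans (le_abs_self r))⟩

theorem clampAbs_of_abs_le {r x : ℝ} (hx : |x| ≤ r) : clampAbs r x = x := by
  rw [clampAbs, min_eq_right (abs_le.1 hx).2, max_eq_right (abs_le.1 hx).1]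

/-- The telescoping series of `a` with its `n`-th increment clamped to `[-r n, r n]`: a limit
candidate that is defined for every real sequence. -/
noncomputable def clampedSum (r a : ℕ → ℝ) : ℝ :=
  a 0 + ∑' n, clampAbs (r n) (a (n + 1) - a n)

/-- The forced limit at rate `r` of a sequence in `[p, q]`: its clamped telescoping series,
projected onto `[p, q]`. -/
noncomputable def forcedLim {p q : ℝ} (hpq : p ≤ q) (r : ℕ → ℝ) (a : ℕ → Icc p q) : Icc p q :=
  projIcc p q hpq (clampedSum r fun n => a n)

theorem continuous_clampedSum {r : ℕ → ℝ} (hr : Summable r) : Continuous (clampedSum r) := by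
  have continuous_term (n : ℕ) :
      Continuous fun a : ℕ → ℝ => clampAbs (r n) (a (n + 1) - a n) :=
    (continuous_clampAbs (r n)).comp (by fun_prop)
  exact (continuous_apply 0).add <|
    continuous_tsum continuous_term hr.abs fun n _ => abs_clampAbs_le (r n) _

theorem tendsto_clampedSum {r a : ℕ → ℝ} (hr : Summable r)
    (ha : ∀ n, |a (n + 1) - a n| ≤ r n) :
    Tendsto a atTop (𝓝 (clampedSum r a)) := by
  have summable_increments : Summable fun n => a (n + 1) - a n := hr.of_norm_bounded ha
  have tendsto_telescope := summable_increments.hasSum.tendsto_sum_nat.const_add (a 0)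
  simpa only [clampedSum, clampAbs_of_abs_le (ha _), Finset.sum_range_sub, add_sub_cancel]
    using tendsto_telescope

theorem continuous_forcedLim {p q : ℝ} (hpq : p ≤ q) {r : ℕ → ℝ} (hr : Summable r) :
    Continuous (forcedLim hpq r) :=
  continuous_projIcc.comp ((continuous_clampedSum hr).comp (by fun_prop))

theorem tendsto_forcedLim {p q : ℝ} (hpq : p ≤ q) {r : ℕ → ℝ} (hr : Summable r)
    {a : ℕ → Icc p q} (ha : ∀ n, dist (a n) (a (n + 1)) ≤ r n) :
    Tendsto a atTop (𝓝 (forcedLim hpq r a)) := by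
  have tendsto_val : Tendsto (fun n => (a n : ℝ)) atTop (𝓝 (clampedSum r fun n => a n)) :=
    tendsto_clampedSum hr fun n => (dist_comm _ _).trans_le (ha n)
  exact ((continuous_projIcc.tendsto _).comp tendsto_val).congr fun n => projIcc_val hpq (a n)

theorem stmt_2_general {p q : ℝ} (hpq : p ≤ q) {u : ℕ → ℝ} (hu : Summable u) :
    ∃ Flim : (ℕ → Icc p q) → Icc p q,
      Continuous Flim ∧
      (∀ a, (∀ n, dist (a n) (a (n + 1)) ≤ u n) → Tendsto a atTop (𝓝 (Flim a))) ∧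
      (∀ a b, (∀ n, dist b (a n) ≤ u n) → Flim a = b) := by
  have hr : Summable fun n => u n + u (n + 1) := hu.add ((summable_nat_add_iff 1).2 hu)
  refine ⟨forcedLim hpq _, continuous_forcedLim hpq hr, fun a ha => ?_, fun a b hab => ?_⟩
  · exact tendsto_forcedLim hpq hr fun n =>
      (ha n).trans (le_add_of_nonneg_right (dist_nonneg.trans (ha (n + 1))))
  · have tendsto_b : Tendsto a atTop (𝓝 b) := tendsto_iff_dist_tendsto_zero.2 <|
      squeeze_zero (fun _ => dist_nonneg) (fun n => (dist_comm _ _).trans_le (hab n))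
        hu.tendsto_atTop_zero
    have dist_increment_le (n : ℕ) : dist (a n) (a (n + 1)) ≤ u n + u (n + 1) :=
      (dist_triangle_left _ _ b).trans (add_le_add (hab n) (hab (n + 1)))
    exact tendsto_nhds_unique (tendsto_forcedLim hpq hr dist_increment_le) tendsto_b

theorem stmt_2 :
    ∃ Flim : (ℕ → Set.Icc (0:ℝ) 1) → Set.Icc (0:ℝ) 1,
      Continuous Flim ∧
      (∀ a : ℕ → Set.Icc (0:ℝ) 1,
        (∀ m : ℕ, ∀ n ≥ m, |(a n : ℝ) - (a (n + 1) : ℝ)| ≤ (1 / 2 : ℝ) ^ m) →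
        Filter.Tendsto (fun n => (a n : ℝ)) Filter.atTop (nhds ((Flim a : ℝ)))) ∧
      (∀ a : ℕ → Set.Icc (0:ℝ) 1, ∀ b : Set.Icc (0:ℝ) 1,
        Filter.Tendsto (fun n => (a n : ℝ)) Filter.atTop (nhds (b : ℝ)) →
        (∀ n : ℕ, |(b : ℝ) - (a n : ℝ)| ≤ (1 / 2 : ℝ) ^ n) →
        Flim a = b) := by
  obtain ⟨Flim, hcont, hlim, heq⟩ := stmt_2_general zero_le_one summable_geometric_two
  exact ⟨Flim, hcont, fun a ha => tendsto_subtype_rng.1 (hlim a fun n => ha n n le_rfl),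
    fun a b _ hab => heq a b hab⟩
end
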